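/- Identify the plane with ℂ, and for a nonzero representation M of Q set Z(M) = Σ_{x=1}^{n+2} dim_k(M_x) · (p_x − p_{x−1}) ∈ ℂ. Then Z(M) lies in the strict right half plane, so one may write Z(M) = r e^{iπφ(M)} with r > 0 and φ(M) ∈ (−1/2, 1/2). With this stability function φ, every indecomposable representation M of Q is φ-stable: every subrepresentation L of M with L ≠ 0 and L ≠ M satisfies φ(L) < φ(M). -/

import Mathlib

open scoped Classical

noncomputable section

namespace CambrianA

/-! ### Combinatorics of a type `A_{n+2}` quiver.

Vertices are `1, …, n+2`.  For `1 ≤ i ≤ n+1`, `ε i = true` means that the arrow between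
`i` and `i+1` is oriented `i → i+1` (`i` is *upper-barred*), and `ε i = false` means it is
oriented `(i+1) → i` (`i` is *lower-barred*). -/

/-- `MaxIncr n ε i j` : the path `i → i+1 → ⋯ → j` is a maximal increasing path of `Q`. -/
def MaxIncr (n : ℕ) (ε : ℕ → Bool) (i j : ℕ) : Prop :=
  1 ≤ i ∧ i ≤ j ∧ j ≤ n + 2 ∧ (∀ ℓ, i ≤ ℓ → ℓ < j → ε ℓ = true) ∧
    (i = 1 ∨ ε (i - 1) = false) ∧ (j = n + 2 ∨ ε j = false)

/-- `MaxDecr n ε i j` : the path `i → i-1 → ⋯ → j` is a maximal decreasing path of `Q`. -/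
def MaxDecr (n : ℕ) (ε : ℕ → Bool) (i j : ℕ) : Prop :=
  1 ≤ j ∧ j ≤ i ∧ i ≤ n + 2 ∧ (∀ ℓ, j ≤ ℓ → ℓ < i → ε ℓ = false) ∧
    (i = n + 2 ∨ ε i = true) ∧ (j = 1 ∨ ε (j - 1) = true)

/-- Vertices of the polygon lying on the lower boundary: `0`, `n+2` and lower-barred ones. -/
def LowerVertex (n : ℕ) (ε : ℕ → Bool) (x : ℕ) : Prop :=
  x = 0 ∨ x = n + 2 ∨ (1 ≤ x ∧ x ≤ n + 1 ∧ ε x = false)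

/-- Vertices of the polygon lying on the upper boundary: `0`, `n+2` and upper-barred ones. -/
def UpperVertex (n : ℕ) (ε : ℕ → Bool) (x : ℕ) : Prop :=
  x = 0 ∨ x = n + 2 ∨ (1 ≤ x ∧ x ≤ n + 1 ∧ ε x = true)

/-- `(a,b)` is a lower boundary edge: `a < b` are consecutive lower vertices. -/
def LowerEdge (n : ℕ) (ε : ℕ → Bool) (a b : ℕ) : Prop :=
  LowerVertex n ε a ∧ LowerVertex n ε b ∧ a < b ∧
    ∀ c, LowerVertex n ε c → ¬(a < c ∧ c < b)

/-- `(a,b)` is an upper boundary edge: `a < b` are consecutive upper vertices. -/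
def UpperEdge (n : ℕ) (ε : ℕ → Bool) (a b : ℕ) : Prop :=
  UpperVertex n ε a ∧ UpperVertex n ε b ∧ a < b ∧
    ∀ c, UpperVertex n ε c → ¬(a < c ∧ c < b)

def BoundaryEdge (n : ℕ) (ε : ℕ → Bool) (a b : ℕ) : Prop :=
  LowerEdge n ε a b ∨ UpperEdge n ε a b

/-- `IsHook n ε a lo hi` : the hook of the arrow of `Q` between `a` and `a+1` is the
maximal path supported on the interval `[lo, hi]`.
If `ε a = true` (arrow `a → a+1`, source `a`), the hook is the maximal decreasing path
starting at `a`; if `ε a = false` (arrow `a+1 → a`, source `a+1`), the hook is the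
maximal increasing path starting at `a+1`. -/
def IsHook (n : ℕ) (ε : ℕ → Bool) (a lo hi : ℕ) : Prop :=
  if ε a = true then
    hi = a ∧ 1 ≤ lo ∧ lo ≤ a ∧ (∀ ℓ, lo ≤ ℓ → ℓ < a → ε ℓ = false) ∧
      (lo = 1 ∨ ε (lo - 1) = true)
  else
    lo = a + 1 ∧ a + 1 ≤ hi ∧ hi ≤ n + 2 ∧ (∀ ℓ, a + 1 ≤ ℓ → ℓ < hi → ε ℓ = true) ∧
      (hi = n + 2 ∨ ε hi = false)

/-- `IsCohook n ε a lo hi` : the cohook of the arrow of `Q` between `a` and `a+1` is the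
maximal path supported on the interval `[lo, hi]`, ending at the target of the arrow. -/
def IsCohook (n : ℕ) (ε : ℕ → Bool) (a lo hi : ℕ) : Prop :=
  if ε a = true then
    lo = a + 1 ∧ a + 1 ≤ hi ∧ hi ≤ n + 2 ∧ (∀ ℓ, a + 1 ≤ ℓ → ℓ < hi → ε ℓ = false) ∧
      (hi = n + 2 ∨ ε hi = true)
  else
    hi = a ∧ 1 ≤ lo ∧ lo ≤ a ∧ (∀ ℓ, lo ≤ ℓ → ℓ < a → ε ℓ = true) ∧
      (lo = 1 ∨ ε (lo - 1) = false)

/-- Counterclockwise neighbor `R⁻¹(ℓ)` of the vertex `ℓ` of the polygon `P(Q)`, for the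
cyclic order `0`, lower-barred vertices increasing, `n+2`, upper-barred vertices
decreasing. -/
def Rinv (n : ℕ) (ε : ℕ → Bool) (ℓ : ℕ) : ℕ :=
  if ℓ = n + 2 then sSup ({0} ∪ {x | 1 ≤ x ∧ x ≤ n + 1 ∧ ε x = true})
  else if 1 ≤ ℓ ∧ ℓ ≤ n + 1 ∧ ε ℓ = true then
    sSup ({0} ∪ {x | 1 ≤ x ∧ x < ℓ ∧ ε x = true})
  else
    sInf ({n + 2} ∪ {x | ℓ < x ∧ x ≤ n + 1 ∧ ε x = false})

/-- `γ(i′,j′)` is a pivot of `γ(i,j)`. -/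
def IsPivot (n : ℕ) (ε : ℕ → Bool) (i j i' j' : ℕ) : Prop :=
  (i' = Rinv n ε i ∧ j' = j ∧ Rinv n ε i < j) ∨
    (i' = i ∧ j' = Rinv n ε j ∧ i < Rinv n ε j)

/-! ### Geometry of the polygon `P(Q)`.

The plane is identified with `ℂ`; `p x` is the vertex of the polygon labeled `x`,
for `0 ≤ x ≤ n+2`. -/

/-- The hypotheses on the points `p 0, …, p (n+2)` realizing the polygon `P(Q)`:
strictly increasing `x`-coordinates; `p 0` and `p (n+2)` on a common horizontal line `L`;
upper-barred vertices above `L`, lower-barred vertices below `L`; convex position. -/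
def PolyPts (n : ℕ) (ε : ℕ → Bool) (p : ℕ → ℂ) : Prop :=
  (∀ a b, a < b → b ≤ n + 2 → (p a).re < (p b).re) ∧
    (p (n + 2)).im = (p 0).im ∧
    (∀ i, 1 ≤ i → i ≤ n + 1 →
      (ε i = true → (p 0).im < (p i).im) ∧ (ε i = false → (p i).im < (p 0).im)) ∧
    ∀ i, i ≤ n + 2 → p i ∉ convexHull ℝ (p '' {j | j ≤ n + 2 ∧ j ≠ i})

/-- The line segment `γ(e.1, e.2)` of the polygon. -/
def Seg (p : ℕ → ℂ) (e : ℕ × ℕ) : Set ℂ := segment ℝ (p e.1) (p e.2)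

/-- Two segments cross when they intersect in a point that is not a common endpoint. -/
def Cross (p : ℕ → ℂ) (e f : ℕ × ℕ) : Prop :=
  ∃ z, z ∈ Seg p e ∧ z ∈ Seg p f ∧
    ¬((z = p e.1 ∨ z = p e.2) ∧ (z = p f.1 ∨ z = p f.2))

/-- Slope of the segment `γ(e.1, e.2)`. -/
def slope (p : ℕ → ℂ) (e : ℕ × ℕ) : ℝ :=
  ((p e.2).im - (p e.1).im) / ((p e.2).re - (p e.1).re)

def ValidPair (n : ℕ) (e : ℕ × ℕ) : Prop := e.1 < e.2 ∧ e.2 ≤ n + 2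

/-- A triangulation of `P(Q)`: a maximal collection of pairwise noncrossing segments. -/
def IsTriangulation (n : ℕ) (p : ℕ → ℂ) (T : Finset (ℕ × ℕ)) : Prop :=
  (∀ e ∈ T, ValidPair n e) ∧ (∀ e ∈ T, ∀ f ∈ T, e ≠ f → ¬Cross p e f) ∧
    ∀ e, ValidPair n e → e ∉ T → ∃ f ∈ T, Cross p e f

/-- Cross product of two planar vectors; positive iff `(u, v)` is counterclockwise. -/
def cross2 (u v : ℂ) : ℝ := u.re * v.im - u.im * v.re

/-- Arrows of the adjacency quiver `Q(T)` of a triangulation `T`: `e → f` whenever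
`e` and `f` are sides of a common triangle of `T` and `f` follows `e` going
counterclockwise around that triangle. -/
def TriArrow (p : ℕ → ℂ) (T : Finset (ℕ × ℕ)) (e f : ℕ × ℕ) : Prop :=
  ∃ a b c : ℕ, a < b ∧ b < c ∧ (a, b) ∈ T ∧ (b, c) ∈ T ∧ (a, c) ∈ T ∧
    ((0 < cross2 (p b - p a) (p c - p a) ∧
        ((e = (a, b) ∧ f = (b, c)) ∨ (e = (b, c) ∧ f = (a, c)) ∨
          (e = (a, c) ∧ f = (a, b)))) ∨
      (cross2 (p b - p a) (p c - p a) < 0 ∧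
        ((e = (a, c) ∧ f = (b, c)) ∨ (e = (b, c) ∧ f = (a, b)) ∨
          (e = (a, b) ∧ f = (a, c)))))

/-! ### Representations of `Q` -/

/-- A finite dimensional representation of the quiver `Q` of type `A_{n+2}` over `k`.
The vector spaces are indexed by `ℕ`, and are required to vanish outside the set
`{1, …, n+2}` of vertices of `Q`.  For each `i`, `fwd i : V i → V (i+1)` is the structure
map of the arrow `i → i+1` (it is required to vanish when the arrow is oriented in the
other direction, i.e. `ε i = false`) and `bwd i : V (i+1) → V i` is the structure map of
the arrow `i+1 → i` (required to vanish when `ε i = true`). -/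
structure ARep (k : Type) [Field k] (n : ℕ) (ε : ℕ → Bool) where
  V : ℕ → Type
  [acg : ∀ x, AddCommGroup (V x)]
  [mod : ∀ x, Module k (V x)]
  [fdim : ∀ x, FiniteDimensional k (V x)]
  triv : ∀ x, x = 0 ∨ n + 2 < x → ∀ v : V x, v = 0
  fwd : ∀ i, V i →ₗ[k] V (i + 1)
  bwd : ∀ i, V (i + 1) →ₗ[k] V i
  fwd_zero : ∀ i, ε i = false → fwd i = 0
  bwd_zero : ∀ i, ε i = true → bwd i = 0

attribute [instance] ARep.acg ARep.mod ARep.fdim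

variable {k : Type} [Field k] {n : ℕ} {ε : ℕ → Bool}

/-- Morphisms of representations. -/
@[ext]
structure ARep.Hom (M N : ARep k n ε) where
  app : ∀ x, M.V x →ₗ[k] N.V x
  comm_fwd : ∀ i (v : M.V i), app (i + 1) (M.fwd i v) = N.fwd i (app i v)
  comm_bwd : ∀ i (v : M.V (i + 1)), app i (M.bwd i v) = N.bwd i (app (i + 1) v)

/-- The identity morphism. -/
def ARep.Hom.id (M : ARep k n ε) : M.Hom M :=
  ⟨fun _ => LinearMap.id, fun _ _ => rfl, fun _ _ => rfl⟩

/-- Composition of morphisms. -/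
def ARep.Hom.comp {M N P : ARep k n ε} (g : N.Hom P) (f : M.Hom N) : M.Hom P where
  app x := (g.app x).comp (f.app x)
  comm_fwd i v := by simp only [LinearMap.comp_apply, f.comm_fwd, g.comm_fwd]
  comm_bwd i v := by simp only [LinearMap.comp_apply, f.comm_bwd, g.comm_bwd]

/-- Sum of two morphisms. -/
def ARep.Hom.add {M N : ARep k n ε} (f g : M.Hom N) : M.Hom N where
  app x := f.app x + g.app x
  comm_fwd i v := by
    simp only [LinearMap.add_apply, f.comm_fwd, g.comm_fwd, map_add]
  comm_bwd i v := by
    simp only [LinearMap.add_apply, f.comm_bwd, g.comm_bwd, map_add]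

/-- Scalar multiple of a morphism. -/
def ARep.Hom.smul {M N : ARep k n ε} (c : k) (f : M.Hom N) : M.Hom N where
  app x := c • f.app x
  comm_fwd i v := by simp only [LinearMap.smul_apply, f.comm_fwd, map_smul]
  comm_bwd i v := by simp only [LinearMap.smul_apply, f.comm_bwd, map_smul]

/-- Isomorphism of representations. -/
def ARep.Iso (M N : ARep k n ε) : Prop :=
  ∃ f : M.Hom N, ∀ x, Function.Bijective (f.app x)

/-- The zero representation(s). -/
def ARep.IsZero (M : ARep k n ε) : Prop := ∀ x, ∀ v : M.V x, v = 0

/-- The support of a representation. -/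
def ARep.supp (M : ARep k n ε) : Set ℕ := {x | ∃ v : M.V x, v ≠ 0}

/-- Direct sum of two representations. -/
def ARep.dsum (M N : ARep k n ε) : ARep k n ε where
  V x := M.V x × N.V x
  acg _ := by infer_instance
  mod _ := by infer_instance
  fdim _ := by infer_instance
  triv x hx v := by
    have h1 := M.triv x hx v.1
    have h2 := N.triv x hx v.2
    exact Prod.ext h1 h2
  fwd i := (M.fwd i).prodMap (N.fwd i)
  bwd i := (M.bwd i).prodMap (N.bwd i)
  fwd_zero i h := by
    show (M.fwd i).prodMap (N.fwd i) = 0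
    rw [M.fwd_zero i h, N.fwd_zero i h]
    apply LinearMap.ext; rintro ⟨a, b⟩; simp
  bwd_zero i h := by
    show (M.bwd i).prodMap (N.bwd i) = 0
    rw [M.bwd_zero i h, N.bwd_zero i h]
    apply LinearMap.ext; rintro ⟨a, b⟩; simp

/-- One dimensional space `k` if `P` holds, `0` otherwise (as a submodule of `k`). -/
def fiber (k : Type) [Field k] (P : Prop) : Submodule k k := if P then ⊤ else ⊥

/-- The canonical map `fiber k P → fiber k Q` : "identity" if `P ∧ Q`, zero otherwise. -/
def fiberMap (k : Type) [Field k] (P Q : Prop) : fiber k P →ₗ[k] fiber k Q :=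
  if h : P ∧ Q then
    { toFun := fun v => ⟨(v : k), by
        have hf : fiber k Q = ⊤ := if_pos h.2
        rw [hf]
        exact Submodule.mem_top⟩
      map_add' := fun _ _ => rfl
      map_smul' := fun _ _ => rfl }
  else 0

/-- The zero representation. -/
def zeroRep (k : Type) [Field k] (n : ℕ) (ε : ℕ → Bool) : ARep k n ε where
  V _ := ↥(fiber k False)
  acg _ := by infer_instance
  mod _ := by infer_instance
  fdim _ := by infer_instance
  triv x _ v := by
    have hfib : fiber k False = ⊥ := if_neg (fun h : False => h.elim)
    obtain ⟨w, hw⟩ := v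
    apply Subtype.ext
    have hb : w ∈ (⊥ : Submodule k k) := hfib ▸ hw
    exact (Submodule.mem_bot k).1 hb
  fwd _ := 0
  bwd _ := 0
  fwd_zero _ _ := rfl
  bwd_zero _ _ := rfl

/-- The condition for a vertex `x` to be in the support of the interval representation
`M(i,j)`. -/
def SuppCond (n i j x : ℕ) : Prop := i ≤ x ∧ x ≤ j ∧ 1 ≤ x ∧ x ≤ n + 2

/-- The interval (string) representation `M(i,j)` of `Q`: one dimensional at each vertex
`x` with `i ≤ x ≤ j`, zero elsewhere, with identity maps on all arrows whose endpoints
both lie in `[i,j]`. -/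
def intervalRep (k : Type) [Field k] (n : ℕ) (ε : ℕ → Bool) (i j : ℕ) : ARep k n ε where
  V x := ↥(fiber k (SuppCond n i j x))
  acg _ := by infer_instance
  mod _ := by infer_instance
  fdim _ := by infer_instance
  triv x hx v := by
    have hP : ¬SuppCond n i j x := by simp only [SuppCond]; omega
    have hfib : fiber k (SuppCond n i j x) = ⊥ := if_neg hP
    obtain ⟨w, hw⟩ := v
    apply Subtype.ext
    have hb : w ∈ (⊥ : Submodule k k) := hfib ▸ hw
    exact (Submodule.mem_bot k).1 hb
  fwd ℓ :=
    if ε ℓ = true then fiberMap k (SuppCond n i j ℓ) (SuppCond n i j (ℓ + 1)) else 0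
  bwd ℓ :=
    if ε ℓ = true then 0 else fiberMap k (SuppCond n i j (ℓ + 1)) (SuppCond n i j ℓ)
  fwd_zero ℓ h := by simp [h]
  bwd_zero ℓ h := by simp [h]

/-- Direct sum of a list of representations. -/
def dsumList (k : Type) [Field k] (n : ℕ) (ε : ℕ → Bool) :
    List (ARep k n ε) → ARep k n ε
  | [] => zeroRep k n ε
  | M :: L => M.dsum (dsumList k n ε L)

/-- Indecomposable representations. -/
def ARep.Indec (M : ARep k n ε) : Prop :=
  ¬M.IsZero ∧ ∀ A B : ARep k n ε, M.Iso (A.dsum B) → A.IsZero ∨ B.IsZero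

/-- `A` is a direct summand of `T`. -/
def ARep.IsSummand (A T : ARep k n ε) : Prop := ∃ B : ARep k n ε, T.Iso (A.dsum B)

/-- A representation is basic when it has no repeated indecomposable direct summand. -/
def ARep.Basic (T : ARep k n ε) : Prop :=
  ∀ A : ARep k n ε, A.Indec → ¬(A.dsum A).IsSummand T

/-- A short exact sequence `0 → B → E → A → 0`. -/
structure SES (B A : ARep k n ε) where
  E : ARep k n ε
  ι : B.Hom E
  π : E.Hom A
  inj : ∀ x, Function.Injective (ι.app x)
  surj : ∀ x, Function.Surjective (π.app x)
  exct : ∀ x (v : E.V x), π.app x v = 0 ↔ ∃ u, ι.app x u = v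

/-- A short exact sequence splits. -/
def SES.Splits {B A : ARep k n ε} (σ : SES B A) : Prop :=
  ∃ r : σ.E.Hom B, ∀ x (v : B.V x), r.app x (σ.ι.app x v) = v

/-- `Ext¹(A, B) = 0` : every short exact sequence `0 → B → E → A → 0` splits. -/
def ExtZero (A B : ARep k n ε) : Prop := ∀ σ : SES B A, σ.Splits

/-- `Ext¹(A,B) ≅ k`, generated by (the class of) a short exact sequence
`0 → B → E → A → 0` with indecomposable middle term `E`: there is a non-split such
sequence `σ` with `σ.E` indecomposable such that every non-split sequence is equivalent
to a nonzero scalar multiple of `σ`. -/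
def ExtOneDimIndecMid (A B : ARep k n ε) : Prop :=
  ∃ σ : SES B A, ¬σ.Splits ∧ σ.E.Indec ∧
    ∀ τ : SES B A, ¬τ.Splits → ∃ c : k, c ≠ 0 ∧
      ∃ φ : σ.E.Hom τ.E, (∀ x, Function.Bijective (φ.app x)) ∧
        (∀ x (v : B.V x), φ.app x (σ.ι.app x v) = τ.ι.app x v) ∧
        (∀ x (v : σ.E.V x), τ.π.app x (φ.app x v) = c • σ.π.app x v)

/-- Almost rigid representations. -/
def AlmostRigid (T : ARep k n ε) : Prop :=
  T.Basic ∧ ∀ A B : ARep k n ε, A.Indec → B.Indec → A.IsSummand T → B.IsSummand T →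
    ExtZero A B ∨ ExtOneDimIndecMid A B

/-- Maximal almost rigid representations. -/
def MaxAlmostRigid (T : ARep k n ε) : Prop :=
  AlmostRigid T ∧ ∀ M : ARep k n ε, ¬M.IsZero → ¬AlmostRigid (T.dsum M)

/-- `f` is a section. -/
def ARep.Hom.IsSection {M N : ARep k n ε} (f : M.Hom N) : Prop :=
  ∃ g : N.Hom M, ∀ x (v : M.V x), g.app x (f.app x v) = v

/-- `f` is a retraction. -/
def ARep.Hom.IsRetraction {M N : ARep k n ε} (f : M.Hom N) : Prop :=
  ∃ g : N.Hom M, ∀ x (v : N.V x), f.app x (g.app x v) = v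

/-- Irreducible morphisms: `f` is neither a section nor a retraction, and in every
factorization `f = g ∘ h` either `h` is a section or `g` is a retraction. -/
def ARep.Hom.Irred {M N : ARep k n ε} (f : M.Hom N) : Prop :=
  ¬f.IsSection ∧ ¬f.IsRetraction ∧
    ∀ (Z : ARep k n ε) (h : M.Hom Z) (g : Z.Hom N),
      (∀ x (v : M.V x), f.app x v = g.app x (h.app x v)) → h.IsSection ∨ g.IsRetraction

/-- Subrepresentations : families of subspaces closed under the structure maps. -/
structure Subrep (M : ARep k n ε) where
  U : ∀ x, Submodule k (M.V x)
  fwd_mem : ∀ i, ∀ v ∈ U i, M.fwd i v ∈ U (i + 1)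
  bwd_mem : ∀ i, ∀ v ∈ U (i + 1), M.bwd i v ∈ U i

/-- The central charge `Z(M) = Σ_{x=1}^{n+2} dim_k(M_x) · (p_x − p_{x−1})`. -/
def charge (p : ℕ → ℂ) (M : ARep k n ε) : ℂ :=
  ∑ x ∈ Finset.Icc 1 (n + 2), (Module.finrank k (M.V x) : ℂ) * (p x - p (x - 1))

/-- The central charge of a subrepresentation. -/
def subCharge (p : ℕ → ℂ) {M : ARep k n ε} (L : Subrep M) : ℂ :=
  ∑ x ∈ Finset.Icc 1 (n + 2), (Module.finrank k (L.U x) : ℂ) * (p x - p (x - 1))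

/-- The representation `F(T) = ⊕_{γ(a,b) ∈ T} M(a+1, b)` attached to a collection `T` of
segments of the polygon `P(Q)`. -/
def FRep (k : Type) [Field k] (n : ℕ) (ε : ℕ → Bool) (T : Finset (ℕ × ℕ)) : ARep k n ε :=
  dsumList k n ε (T.toList.map fun e => intervalRep k n ε (e.1 + 1) e.2)

end CambrianA

namespace CambrianA

/-!
The proof is a sign count. In type `A`, any inclusion `A < B` of subspaces at a vertex can be
separated by a rank-one projector defined on all vertices to the right; at the leftmost vertex of
the support this is an idempotent endomorphism of `M`, so an indecomposable `M` is thin, supported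
on an interval `[a, b]`, and has injective structure maps there. Hence `Z(M) = p_b - p_{a-1}` is a
chord of the polygon. For a subrepresentation `L`, Abel summation writes the cross product of `Z(M)`
and `Z(L)` as a sum over the vertices `x` with `a ≤ x < b` of `dim L_x - dim L_{x+1}` times the
signed side of the chord on which `p_x` lies. The orientation of the arrow at `x` fixes the sign of
the first factor by injectivity, and that of the second by convexity; the two are always opposite.
-/

/-! ### Linear algebra -/

section LinearAlgebra

variable {K V W : Type*} [Field K] [AddCommGroup V] [Module K V] [AddCommGroup W] [Module K W]

lemma exists_le_ker_and_apply_eq_one {A : Submodule K V} {v : V} (hv : v ∉ A) :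
    ∃ f : Module.Dual K V, A ≤ LinearMap.ker f ∧ f v = 1 := by
  obtain ⟨f, hfA, hfv⟩ := (0 : A →ₗ[K] K).exists_extend_of_notMem hv 1
  exact ⟨f, fun w hw => LinearMap.congr_fun hfA ⟨w, hw⟩, hfv⟩

lemma exists_dual_comp_eq_of_comap_le_ker (φ : V →ₗ[K] W) {A : Submodule K W}
    {f : Module.Dual K V} (hf : A.comap φ ≤ LinearMap.ker f) :
    ∃ g : Module.Dual K W, A ≤ LinearMap.ker g ∧ g ∘ₗ φ = f := by
  have hker : LinearMap.ker (A.mkQ ∘ₗ φ) ≤ LinearMap.ker f := by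
    rwa [LinearMap.ker_comp, Submodule.ker_mkQ]
  have hrange : f ∈ LinearMap.range (A.mkQ ∘ₗ φ).dualMap := by
    rw [LinearMap.range_dualMap_eq_dualAnnihilator_ker, Submodule.mem_dualAnnihilator]
    exact hker
  obtain ⟨g, rfl⟩ := hrange
  exact ⟨g ∘ₗ A.mkQ, A.ker_mkQ.symm.le.trans (LinearMap.ker_le_ker_comp _ _), rfl⟩

lemma comap_lt_comap_of_le_sup_range (φ : V →ₗ[K] W) {A B : Submodule K W} (hAB : A < B)
    (hB : B ≤ A ⊔ LinearMap.range φ) : A.comap φ < B.comap φ := by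
  obtain ⟨b, hbB, hbA⟩ := SetLike.exists_of_lt hAB
  obtain ⟨a, ha, _, ⟨w, rfl⟩, rfl⟩ := Submodule.mem_sup.1 (hB hbB)
  refine SetLike.lt_iff_le_and_exists.2 ⟨Submodule.comap_mono hAB.le, w, ?_, fun hw => ?_⟩
  · exact (B.add_mem_iff_right (hAB.le ha)).1 hbB
  · exact hbA (A.add_mem ha hw)

end LinearAlgebra

/-! ### Supports and direct sum decompositions -/

section Representations

variable {k : Type} [Field k] {n : ℕ} {ε : ℕ → Bool} {M : ARep k n ε}

namespace ARep

lemma finrank_pos_iff_mem_supp {x : ℕ} : 0 < Module.finrank k (M.V x) ↔ x ∈ M.supp :=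
  Module.finrank_pos_iff_exists_ne_zero

lemma subsingleton_of_notMem_supp {x : ℕ} (hx : x ∉ M.supp) : Subsingleton (M.V x) := by
  rwa [← finrank_pos_iff_mem_supp, Module.finrank_pos_iff, not_nontrivial_iff_subsingleton] at hx

lemma finrank_eq_zero_of_notMem_supp {x : ℕ} (hx : x ∉ M.supp) : Module.finrank k (M.V x) = 0 :=
  Nat.eq_zero_of_not_pos (finrank_pos_iff_mem_supp.not.2 hx)

lemma supp_subset_Icc (M : ARep k n ε) : M.supp ⊆ Set.Icc 1 (n + 2) := by
  rintro x ⟨v, hv⟩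
  by_contra hx
  exact hv (M.triv x (by rw [Set.mem_Icc] at hx; lia) v)

lemma nonempty_supp (hM : ¬M.IsZero) : M.supp.Nonempty := by
  simp only [IsZero, not_forall] at hM
  exact hM

end ARep

/-- A subrepresentation, regarded as a representation in its own right. -/
def Subrep.toRep (L : Subrep M) : ARep k n ε where
  V x := L.U x
  acg _ := inferInstance
  mod _ := inferInstance
  fdim _ := inferInstance
  triv x hx v := Subtype.ext (M.triv x hx v)
  fwd i := (M.fwd i).restrict (L.fwd_mem i)
  bwd i := (M.bwd i).restrict (L.bwd_mem i)
  fwd_zero i h := LinearMap.ext fun v => Subtype.ext <| LinearMap.congr_fun (M.fwd_zero i h) v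
  bwd_zero i h := LinearMap.ext fun v => Subtype.ext <| LinearMap.congr_fun (M.bwd_zero i h) v

lemma Subrep.not_isZero_toRep {L : Subrep M} (hL : ∃ x, L.U x ≠ ⊥) : ¬L.toRep.IsZero := by
  obtain ⟨x, hx⟩ := hL
  obtain ⟨v, hvL, hv⟩ := Submodule.exists_mem_ne_zero_of_ne_bot hx
  exact fun h => hv (congrArg Subtype.val (h x ⟨v, hvL⟩))

lemma Subrep.eq_bot_of_isZero_toRep {L : Subrep M} (hL : L.toRep.IsZero) (x : ℕ) : L.U x = ⊥ :=
  by_contra fun hx => not_isZero_toRep ⟨x, hx⟩ hL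

/-- The kernel of an endomorphism, as a subrepresentation. -/
def ARep.Hom.ker (e : M.Hom M) : Subrep M where
  U x := LinearMap.ker (e.app x)
  fwd_mem i v hv := by
    rw [LinearMap.mem_ker] at hv ⊢
    rw [e.comm_fwd, hv, map_zero]
  bwd_mem i v hv := by
    rw [LinearMap.mem_ker] at hv ⊢
    rw [e.comm_bwd, hv, map_zero]

/-- The image of an endomorphism, as a subrepresentation. -/
def ARep.Hom.range (e : M.Hom M) : Subrep M where
  U x := LinearMap.range (e.app x)
  fwd_mem i := by
    rintro _ ⟨w, rfl⟩
    exact ⟨M.fwd i w, e.comm_fwd i w⟩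
  bwd_mem i := by
    rintro _ ⟨w, rfl⟩
    exact ⟨M.bwd i w, e.comm_bwd i w⟩

lemma ARep.iso_dsum_of_isCompl {L L' : Subrep M} (h : ∀ x, IsCompl (L.U x) (L'.U x)) :
    M.Iso (L.toRep.dsum L'.toRep) := by
  let decomp (x : ℕ) : (L.U x × L'.U x) ≃ₗ[k] M.V x := (L.U x).prodEquivOfIsCompl (L'.U x) (h x)
  have hfwd (i : ℕ) (w : L.U i × L'.U i) :
      (decomp (i + 1)).symm (M.fwd i (decomp i w)) = (L.toRep.fwd i w.1, L'.toRep.fwd i w.2) :=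
    (decomp (i + 1)).symm_apply_eq.2 (map_add (M.fwd i) _ _)
  have hbwd (i : ℕ) (w : L.U (i + 1) × L'.U (i + 1)) :
      (decomp i).symm (M.bwd i (decomp (i + 1) w)) = (L.toRep.bwd i w.1, L'.toRep.bwd i w.2) :=
    (decomp i).symm_apply_eq.2 (map_add (M.bwd i) _ _)
  refine ⟨⟨fun x => (decomp x).symm.toLinearMap, fun i v => ?_, fun i v => ?_⟩,
    fun x => (decomp x).symm.bijective⟩
  · obtain ⟨w, rfl⟩ := (decomp i).surjective v
    exact (hfwd i w).trans (congrArg ((L.toRep.dsum L'.toRep).fwd i)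
      ((decomp i).symm_apply_apply w).symm)
  · obtain ⟨w, rfl⟩ := (decomp (i + 1)).surjective v
    exact (hbwd i w).trans (congrArg ((L.toRep.dsum L'.toRep).bwd i)
      ((decomp (i + 1)).symm_apply_apply w).symm)

lemma ARep.Indec.eq_zero_or_eq_id_of_isIdempotentElem (hM : M.Indec) (e : M.Hom M)
    (he : ∀ x, IsIdempotentElem (e.app x)) :
    (∀ x, e.app x = 0) ∨ (∀ x, e.app x = LinearMap.id) := by
  have hcompl (x : ℕ) : IsCompl (e.range.U x) (e.ker.U x) :=
    LinearMap.IsIdempotentElem.isCompl (he x)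
  refine (hM.2 _ _ (iso_dsum_of_isCompl hcompl)).imp (fun hrange x => ?_) (fun hker x => ?_)
  · exact LinearMap.range_eq_bot.1 (Subrep.eq_bot_of_isZero_toRep hrange x)
  · have hinj : Function.Injective (e.app x) :=
      LinearMap.ker_eq_bot.1 (Subrep.eq_bot_of_isZero_toRep hker x)
    exact LinearMap.ext fun v => hinj (LinearMap.congr_fun (he x) v)

/-! ### Splitting off an interval -/

/-- An idempotent endomorphism of rank at most one, `w ↦ dual y w • vec y` at the vertex `y`, of
the restriction of `M` to the vertices `y ≥ x`. Its components at the vertices `y < x` are not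
required to commute with the structure maps. -/
structure RankOneProj (M : ARep k n ε) (x : ℕ) where
  vec : ∀ y, M.V y
  dual : ∀ y, Module.Dual k (M.V y)
  idem : ∀ y, dual y (vec y) • vec y = vec y
  comm_fwd : ∀ i, x ≤ i → ∀ w, dual (i + 1) (M.fwd i w) • vec (i + 1) = dual i w • M.fwd i (vec i)
  comm_bwd : ∀ i, x ≤ i → ∀ w, dual i (M.bwd i w) • vec i = dual (i + 1) w • M.bwd i (vec (i + 1))

namespace RankOneProj

/-- `e` separates `A < B` when its image at `x` is a line of `B` and its kernel contains `A`. -/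
def Separates {x : ℕ} (e : RankOneProj M x) (A B : Submodule k (M.V x)) : Prop :=
  e.vec x ∈ B ∧ A ≤ LinearMap.ker (e.dual x) ∧ e.dual x (e.vec x) = 1

/-- The zero endomorphism. -/
def zero (M : ARep k n ε) (x : ℕ) : RankOneProj M x where
  vec _ := 0
  dual _ := 0
  idem _ := smul_zero _
  comm_fwd _ _ _ := by simp
  comm_bwd _ _ _ := by simp

lemma exists_separates_of_extend {x : ℕ} (e : RankOneProj M (x + 1))
    {A B : Submodule k (M.V x)} {v : M.V x} {f : Module.Dual k (M.V x)}
    (hv : v ∈ B) (hf : A ≤ LinearMap.ker f) (hfv : f v = 1)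
    (hfwd : ∀ w, e.dual (x + 1) (M.fwd x w) • e.vec (x + 1) = f w • M.fwd x v)
    (hbwd : ∀ w, f (M.bwd x w) • v = e.dual (x + 1) w • M.bwd x (e.vec (x + 1))) :
    ∃ e' : RankOneProj M x, e'.Separates A B := by
  refine ⟨⟨Function.update e.vec x v, Function.update e.dual x f, fun y => ?_, fun i hi w => ?_,
    fun i hi w => ?_⟩, ?_⟩
  · obtain rfl | hy := eq_or_ne y x
    · simp [hfv]
    · simp [hy, e.idem]
  · obtain rfl | hi := hi.eq_or_lt
    · simp [hfwd]
    · simp [hi.ne', (hi.trans i.lt_succ_self).ne', e.comm_fwd i hi]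
  · obtain rfl | hi := hi.eq_or_lt
    · simp [hbwd]
    · simp [hi.ne', (hi.trans i.lt_succ_self).ne', e.comm_bwd i hi]
  · simpa [Separates] using ⟨hv, hf, hfv⟩

lemma exists_separates_of_fwd {x : ℕ} (hε : ε x = true)
    (ih : ∀ A B : Submodule k (M.V (x + 1)), A < B → ∃ e : RankOneProj M (x + 1), e.Separates A B)
    {A B : Submodule k (M.V x)} (hAB : A < B) : ∃ e : RankOneProj M x, e.Separates A B := by
  have hbwd := M.bwd_zero x hε
  obtain hmap | hker := Submodule.map_strict_mono_or_ker_sup_lt_ker_sup (M.fwd x) hAB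
  · obtain ⟨e, ⟨v, hv, hev⟩, hA, he1⟩ := ih _ _ hmap
    have hfA : A ≤ LinearMap.ker (e.dual (x + 1) ∘ₗ M.fwd x) := by
      rw [LinearMap.ker_comp]
      exact Submodule.map_le_iff_le_comap.1 hA
    refine exists_separates_of_extend e hv hfA ?_ (fun w => ?_) (by simp [hbwd])
    · rw [LinearMap.comp_apply, hev, he1]
    · rw [LinearMap.comp_apply, hev]
  · obtain ⟨v, ⟨hv0, hvB⟩, hvA⟩ := SetLike.exists_of_lt hker
    obtain ⟨f, hfA, hfv⟩ :=
      exists_le_ker_and_apply_eq_one (A := A) (v := v) fun h => hvA ⟨hv0, h⟩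
    refine exists_separates_of_extend (zero M (x + 1)) hvB hfA hfv ?_ (by simp [zero, hbwd])
    simp [zero, LinearMap.mem_ker.1 hv0]

lemma exists_separates_of_bwd {x : ℕ} (hε : ε x = false)
    (ih : ∀ A B : Submodule k (M.V (x + 1)), A < B → ∃ e : RankOneProj M (x + 1), e.Separates A B)
    {A B : Submodule k (M.V x)} (hAB : A < B) : ∃ e : RankOneProj M x, e.Separates A B := by
  have hfwd := M.fwd_zero x hε
  by_cases hB : B ≤ A ⊔ LinearMap.range (M.bwd x)
  · obtain ⟨e, hvB, hA, he1⟩ := ih _ _ (comap_lt_comap_of_le_sup_range (M.bwd x) hAB hB)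
    obtain ⟨f, hfA, hf⟩ := exists_dual_comp_eq_of_comap_le_ker (M.bwd x) hA
    replace hf (w : M.V (x + 1)) : f (M.bwd x w) = e.dual (x + 1) w := LinearMap.congr_fun hf w
    exact exists_separates_of_extend e (v := M.bwd x (e.vec (x + 1))) hvB hfA ((hf _).trans he1)
      (by simp [hfwd]) (by simp [hf])
  · obtain ⟨v, hvB, hv⟩ := SetLike.not_le_iff_exists.1 hB
    obtain ⟨f, hf, hfv⟩ := exists_le_ker_and_apply_eq_one hv
    obtain ⟨hfA, hfrange⟩ := sup_le_iff.1 hf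
    refine exists_separates_of_extend (zero M (x + 1)) hvB hfA hfv (by simp [zero, hfwd]) ?_
    exact fun w => by simp [zero, LinearMap.mem_ker.1 (hfrange ⟨w, rfl⟩)]

/-- Downward induction on `x`: if the arrow between `x` and `x + 1` carries `A < B` to a strict
inclusion at `x + 1`, a separating projector there is transported back to `x`; otherwise some vector
of `B` outside `A` can be split off without touching the vertices beyond `x`. -/
theorem exists_separates {x : ℕ} {A B : Submodule k (M.V x)} (hAB : A < B) :
    ∃ e : RankOneProj M x, e.Separates A B := by
  by_cases hx : n + 2 < x
  · obtain ⟨v, -, hv⟩ := SetLike.exists_of_lt hAB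
    exact absurd (M.triv x (.inr hx) v ▸ A.zero_mem) hv
  · cases hε : ε x with
    | true => exact exists_separates_of_fwd hε (fun _ _ h => exists_separates h) hAB
    | false => exact exists_separates_of_bwd hε (fun _ _ h => exists_separates h) hAB
termination_by n + 3 - x

/-- The extension by zero of `e` to the vertices left of `x`, when `M` vanishes there. -/
def toEnd {x : ℕ} (e : RankOneProj M x) (hx : ∀ y < x, y ∉ M.supp) : M.Hom M where
  app y := (e.dual y).smulRight (e.vec y)
  comm_fwd i w := by
    obtain hi | hi := lt_or_ge i x
    · have := ARep.subsingleton_of_notMem_supp (hx i hi)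
      simp [Subsingleton.elim w 0]
    · simpa using e.comm_fwd i hi w
  comm_bwd i w := by
    obtain hi | hi := lt_or_ge i x
    · have := ARep.subsingleton_of_notMem_supp (hx i hi)
      exact Subsingleton.elim _ _
    · simpa using e.comm_bwd i hi w

end RankOneProj

/-! ### Indecomposable representations are intervals -/

namespace ARep

theorem Indec.finrank_le_one (hM : M.Indec) (y : ℕ) : Module.finrank k (M.V y) ≤ 1 := by
  obtain ⟨v, hv⟩ := Nat.sInf_mem (nonempty_supp hM.1)
  have := nontrivial_of_ne v 0 hv
  obtain ⟨e, -, -, he⟩ := RankOneProj.exists_separates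
    (bot_lt_top (α := Submodule k (M.V (sInf M.supp))))
  let E : M.Hom M := e.toEnd fun _ => Nat.notMem_of_lt_sInf
  have hE (x : ℕ) : IsIdempotentElem (E.app x) := by
    ext w
    simp [E, RankOneProj.toEnd, e.idem]
  obtain h | h := hM.eq_zero_or_eq_id_of_isIdempotentElem E hE
  · have hvec : e.vec (sInf M.supp) = 0 := by
      simpa [E, RankOneProj.toEnd, he] using LinearMap.congr_fun (h (sInf M.supp)) (e.vec _)
    simp [hvec] at he
  · exact _root_.finrank_le_one (e.vec y) fun w => ⟨e.dual y w, LinearMap.congr_fun (h y) w⟩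

lemma Indec.finrank_eq_one (hM : M.Indec) {x : ℕ} (hx : x ∈ M.supp) :
    Module.finrank k (M.V x) = 1 :=
  (hM.finrank_le_one x).antisymm (finrank_pos_iff_mem_supp.2 hx)

/-- The truncation of the identity to the vertices `t ≤ x`, when `M` is disconnected at `x`. -/
def truncEnd {x : ℕ} (hfwd : M.fwd x = 0) (hbwd : M.bwd x = 0) : M.Hom M where
  app t := if t ≤ x then LinearMap.id else 0
  comm_fwd i w := by
    obtain h | rfl | h := lt_trichotomy i x
    · simp [h.le, Nat.succ_le_of_lt h]
    · simp [hfwd]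
    · simp [h.not_ge, (h.trans i.lt_succ_self).not_ge]
  comm_bwd i w := by
    obtain h | rfl | h := lt_trichotomy i x
    · simp [h.le, Nat.succ_le_of_lt h]
    · simp [hbwd]
    · simp [h.not_ge, (h.trans i.lt_succ_self).not_ge]

theorem Indec.fwd_ne_zero_or_bwd_ne_zero (hM : M.Indec) {x y z : ℕ} (hy : y ∈ M.supp)
    (hz : z ∈ M.supp) (hyx : y ≤ x) (hxz : x < z) : M.fwd x ≠ 0 ∨ M.bwd x ≠ 0 := by
  by_contra! ⟨hfwd, hbwd⟩
  obtain ⟨v, hv⟩ := hy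
  obtain ⟨w, hw⟩ := hz
  have hidem (t : ℕ) : IsIdempotentElem ((truncEnd hfwd hbwd).app t) := by
    by_cases ht : t ≤ x <;> simp [truncEnd, ht, IsIdempotentElem, Module.End.mul_eq_comp]
  obtain h | h := hM.eq_zero_or_eq_id_of_isIdempotentElem _ hidem
  · exact hv (by simpa [truncEnd, hyx] using LinearMap.congr_fun (h y) v)
  · exact hw (by simpa [truncEnd, hxz.not_ge] using (LinearMap.congr_fun (h z) w).symm)

lemma Indec.ordConnected_supp (hM : M.Indec) : M.supp.OrdConnected := by
  refine ⟨fun y hy z hz x hx => by_contra fun hxM => ?_⟩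
  have := subsingleton_of_notMem_supp hxM
  have hxz : x < z := hx.2.lt_of_ne fun h => hxM (h ▸ hz)
  obtain h | h := hM.fwd_ne_zero_or_bwd_ne_zero hy hz hx.1 hxz
  · exact h (Subsingleton.elim _ _)
  · exact h (Subsingleton.elim _ _)

lemma Indec.exists_supp_eq_Icc (hM : M.Indec) :
    ∃ a b, 1 ≤ a ∧ a ≤ b ∧ b ≤ n + 2 ∧ M.supp = Set.Icc a b := by
  have hne := nonempty_supp hM.1
  have hbdd : BddAbove M.supp := bddAbove_Icc.mono M.supp_subset_Icc
  have ha := Nat.sInf_mem hne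
  have hb := Nat.sSup_mem hne hbdd
  exact ⟨sInf M.supp, sSup M.supp, (M.supp_subset_Icc ha).1, Nat.sInf_le hb,
    (M.supp_subset_Icc hb).2, Set.Subset.antisymm
      (fun x hx => ⟨Nat.sInf_le hx, le_csSup hbdd hx⟩) (hM.ordConnected_supp.out ha hb)⟩

lemma Indec.isSimpleModule (hM : M.Indec) {x : ℕ} (hx : x ∈ M.supp) : IsSimpleModule k (M.V x) :=
  isSimpleModule_iff_finrank_eq_one.2 (hM.finrank_eq_one hx)

lemma Indec.injective_fwd (hM : M.Indec) {x : ℕ} (hx : x ∈ M.supp) (hx' : x + 1 ∈ M.supp)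
    (hε : ε x = true) : Function.Injective (M.fwd x) := by
  have := hM.isSimpleModule hx
  exact LinearMap.injective_of_ne_zero <|
    (hM.fwd_ne_zero_or_bwd_ne_zero hx hx' le_rfl x.lt_succ_self).resolve_right
      (not_not.2 (M.bwd_zero x hε))

lemma Indec.injective_bwd (hM : M.Indec) {x : ℕ} (hx : x ∈ M.supp) (hx' : x + 1 ∈ M.supp)
    (hε : ε x = false) : Function.Injective (M.bwd x) := by
  have := hM.isSimpleModule hx'
  exact LinearMap.injective_of_ne_zero <|
    (hM.fwd_ne_zero_or_bwd_ne_zero hx hx' le_rfl x.lt_succ_self).resolve_left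
      (not_not.2 (M.fwd_zero x hε))

end ARep

namespace Subrep

lemma finrank_le_finrank_succ (L : Subrep M) {x : ℕ} (h : Function.Injective (M.fwd x)) :
    Module.finrank k (L.U x) ≤ Module.finrank k (L.U (x + 1)) :=
  LinearMap.finrank_le_finrank_of_injective (f := (M.fwd x).restrict (L.fwd_mem x))
    fun _ _ hvw => Subtype.ext (h (congrArg Subtype.val hvw))

lemma finrank_succ_le_finrank (L : Subrep M) {x : ℕ} (h : Function.Injective (M.bwd x)) :
    Module.finrank k (L.U (x + 1)) ≤ Module.finrank k (L.U x) :=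
  LinearMap.finrank_le_finrank_of_injective (f := (M.bwd x).restrict (L.bwd_mem x))
    fun _ _ hvw => Subtype.ext (h (congrArg Subtype.val hvw))

lemma finrank_eq_zero_of_notMem_supp (L : Subrep M) {x : ℕ} (hx : x ∉ M.supp) :
    Module.finrank k (L.U x) = 0 :=
  Nat.eq_zero_of_le_zero <|
    (L.U x).finrank_le.trans_eq (ARep.finrank_eq_zero_of_notMem_supp hx)

lemma exists_finrank_ne_finrank_succ (hM : M.Indec) {L : Subrep M} (hbot : ∃ x, L.U x ≠ ⊥)
    (htop : ∃ x, L.U x ≠ ⊤) :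
    ∃ x ∈ M.supp, x + 1 ∈ M.supp ∧ Module.finrank k (L.U x) ≠ Module.finrank k (L.U (x + 1)) := by
  by_contra! hconst
  obtain ⟨y, hy⟩ := hbot
  obtain ⟨z, hz⟩ := htop
  have hy0 : Module.finrank k (L.U y) ≠ 0 := Submodule.finrank_eq_zero.not.2 hy
  have hzlt : Module.finrank k (L.U z) < Module.finrank k (M.V z) := Submodule.finrank_lt hz
  have hyM : y ∈ M.supp := by_contra fun h => hy0 (L.finrank_eq_zero_of_notMem_supp h)
  have hzM : z ∈ M.supp := ARep.finrank_pos_iff_mem_supp.1 hzlt.pos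
  have hmono : MonotoneOn (fun x => Module.finrank k (L.U x)) M.supp :=
    monotoneOn_of_le_add_one hM.ordConnected_supp fun x _ hx hx' => (hconst x hx hx').le
  have hanti : AntitoneOn (fun x => Module.finrank k (L.U x)) M.supp :=
    antitoneOn_of_add_one_le hM.ordConnected_supp fun x _ hx hx' => (hconst x hx hx').ge
  have hyz : Module.finrank k (L.U y) = Module.finrank k (L.U z) := by
    obtain h | h := le_total y z
    · exact (hmono hyM hzM h).antisymm (hanti hyM hzM h)
    · exact (hanti hzM hyM h).antisymm (hmono hzM hyM h)
  have hz1 := hM.finrank_le_one z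
  lia

end Subrep

end Representations

/-! ### Convex position -/

lemma mem_of_re_eq_of_im_mem_uIcc {S : Set ℂ} (hS : Convex ℝ S) {u w z : ℂ} (hw : w ∈ S)
    (hz : z ∈ S) (hwre : w.re = u.re) (hzre : z.re = u.re) (hu : u.im ∈ Set.uIcc w.im z.im) :
    u ∈ S := by
  have hvert {v : ℂ} (hv : v.re = u.re) : AffineMap.lineMap (k := ℝ) (u.re : ℂ) (u.re + Complex.I)
      v.im = v := by
    apply Complex.ext <;> simp [AffineMap.lineMap_apply, hv]
  have hpre : ((AffineMap.lineMap (k := ℝ) (u.re : ℂ) (u.re + Complex.I)) ⁻¹' S).OrdConnected :=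
    (hS.affine_preimage _).ordConnected
  have := hpre.uIcc_subset (by rwa [Set.mem_preimage, hvert hwre])
    (by rwa [Set.mem_preimage, hvert hzre]) hu
  rwa [Set.mem_preimage, hvert rfl] at this

lemma exists_mem_segment_re_eq {a b : ℂ} {t : ℝ} (ha : a.re ≤ t) (hb : t ≤ b.re) :
    ∃ w ∈ segment ℝ a b, w.re = t := by
  have ht : t ∈ segment ℝ a.re b.re := by
    rw [segment_eq_Icc (ha.trans hb)]
    exact ⟨ha, hb⟩
  rwa [← Complex.reLm_coe, ← LinearMap.coe_toAffineMap, ← image_segment] at ht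

lemma cross2_sub_eq_of_mem_segment {a b u w : ℂ} (hw : w ∈ segment ℝ a b) (hre : w.re = u.re) :
    cross2 (b - a) (u - a) = (b.re - a.re) * (u.im - w.im) := by
  obtain ⟨s, t, -, -, hst, rfl⟩ := hw
  obtain rfl : s = 1 - t := by linarith
  simp only [cross2, ← hre, Complex.sub_re, Complex.sub_im, Complex.add_re, Complex.add_im,
    Complex.smul_re, Complex.smul_im, smul_eq_mul]
  ring

lemma PolyPts.exists_mem_segment_im_notMem_uIcc {n : ℕ} {ε : ℕ → Bool} {p : ℕ → ℂ}
    (hp : PolyPts n ε p) {c x b : ℕ} (hcx : c < x) (hxb : x < b) (hb : b ≤ n + 2) :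
    ∃ w ∈ segment ℝ (p c) (p b), w.re = (p x).re ∧ (p x).im ∉ Set.uIcc w.im (p 0).im := by
  obtain ⟨hre, hends, -, hconv⟩ := hp
  have hS := convex_convexHull ℝ (p '' {j | j ≤ n + 2 ∧ j ≠ x})
  have hmem {j : ℕ} (hj : j ≤ n + 2) (hjx : j ≠ x) :
      p j ∈ convexHull ℝ (p '' {j | j ≤ n + 2 ∧ j ≠ x}) :=
    subset_convexHull ℝ _ ⟨j, ⟨hj, hjx⟩, rfl⟩
  obtain ⟨w, hw, hwre⟩ :=
    exists_mem_segment_re_eq (hre c x hcx (by lia)).le (hre x b hxb hb).le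
  obtain ⟨z, hz, hzre⟩ :=
    exists_mem_segment_re_eq (hre 0 x (by lia) (by lia)).le (hre x (n + 2) (by lia) le_rfl).le
  have hzim : z.im = (p 0).im := by
    have h := Set.mem_image_of_mem Complex.imLm.toAffineMap hz
    rw [image_segment] at h
    simpa [hends] using h
  refine ⟨w, hw, hwre, fun hx => hconv x (by lia) ?_⟩
  exact mem_of_re_eq_of_im_mem_uIcc hS
    (hS.segment_subset (hmem (by lia) hcx.ne) (hmem hb hxb.ne') hw)
    (hS.segment_subset (hmem (by lia) (by lia)) (hmem le_rfl (by lia)) hz) hwre hzre (hzim ▸ hx)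

lemma PolyPts.cross2_pos_of_upper {n : ℕ} {ε : ℕ → Bool} {p : ℕ → ℂ} (hp : PolyPts n ε p)
    {c x b : ℕ} (hcx : c < x) (hxb : x < b) (hb : b ≤ n + 2) (hε : ε x = true) :
    0 < cross2 (p b - p c) (p x - p c) := by
  obtain ⟨w, hw, hwre, hx⟩ := hp.exists_mem_segment_im_notMem_uIcc hcx hxb hb
  have h0 : (p 0).im < (p x).im := (hp.2.2.1 x (by lia) (by lia)).1 hε
  have hw_lt : w.im < (p x).im := by
    by_contra! h
    exact hx (Set.mem_uIcc.2 (.inr ⟨h0.le, h⟩))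
  rw [cross2_sub_eq_of_mem_segment hw hwre]
  exact mul_pos (sub_pos.2 (hp.1 c b (by lia) hb)) (sub_pos.2 hw_lt)

lemma PolyPts.cross2_neg_of_lower {n : ℕ} {ε : ℕ → Bool} {p : ℕ → ℂ} (hp : PolyPts n ε p)
    {c x b : ℕ} (hcx : c < x) (hxb : x < b) (hb : b ≤ n + 2) (hε : ε x = false) :
    cross2 (p b - p c) (p x - p c) < 0 := by
  obtain ⟨w, hw, hwre, hx⟩ := hp.exists_mem_segment_im_notMem_uIcc hcx hxb hb
  have h0 : (p x).im < (p 0).im := (hp.2.2.1 x (by lia) (by lia)).2 hε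
  have hw_lt : (p x).im < w.im := by
    by_contra! h
    exact hx (Set.mem_uIcc.2 (.inl ⟨h, h0.le⟩))
  rw [cross2_sub_eq_of_mem_segment hw hwre]
  exact mul_neg_of_pos_of_neg (sub_pos.2 (hp.1 c b (by lia) hb)) (sub_neg.2 hw_lt)

/-! ### Central charges -/

lemma sum_Icc_mul_sub {R : Type*} [CommRing R] (d q : ℕ → R) (N : ℕ) :
    ∑ x ∈ Finset.Icc 1 N, d x * (q x - q (x - 1)) =
      d (N + 1) * q N - d 0 * q 0 + ∑ x ∈ Finset.range (N + 1), (d x - d (x + 1)) * q x := by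
  induction N with
  | zero =>
    rw [Finset.Icc_eq_empty_of_lt zero_lt_one, Finset.sum_empty, Finset.sum_range_one]
    ring
  | succ N ih =>
    rw [Finset.sum_Icc_succ_top (by lia), ih, Finset.sum_range_succ _ (N + 1), Nat.add_sub_cancel]
    ring

section Charge

variable {k : Type} [Field k] {n : ℕ} {ε : ℕ → Bool} {p : ℕ → ℂ} {M : ARep k n ε}

theorem PolyPts.charge_re_pos (hp : PolyPts n ε p) (hM : ¬M.IsZero) : 0 < (charge p M).re := by
  have hedge (x : ℕ) (hx : x ∈ Finset.Icc 1 (n + 2)) : 0 < (p x).re - (p (x - 1)).re := by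
    rw [Finset.mem_Icc] at hx
    exact sub_pos.2 (hp.1 (x - 1) x (by lia) hx.2)
  obtain ⟨x, hx⟩ := ARep.nonempty_supp hM
  have hxmem : x ∈ Finset.Icc 1 (n + 2) := Finset.mem_Icc.2 (M.supp_subset_Icc hx)
  have hdim : (0 : ℝ) < Module.finrank k (M.V x) :=
    Nat.cast_pos.2 (ARep.finrank_pos_iff_mem_supp.2 hx)
  have hre : (charge p M).re = ∑ x ∈ Finset.Icc 1 (n + 2),
      (Module.finrank k (M.V x) : ℝ) * ((p x).re - (p (x - 1)).re) := by
    simp [charge, Complex.re_sum]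
  rw [hre]
  exact Finset.sum_pos' (fun y hy => mul_nonneg (Nat.cast_nonneg _) (hedge y hy).le)
    ⟨x, hxmem, mul_pos hdim (hedge x hxmem)⟩

lemma ARep.Indec.charge_eq (hM : M.Indec) {a b : ℕ} (ha : 1 ≤ a) (hab : a ≤ b) (hb : b ≤ n + 2)
    (hsupp : M.supp = Set.Icc a b) : charge p M = p b - p (a - 1) := by
  have hsub : Finset.Icc a b ⊆ Finset.Icc 1 (n + 2) := Finset.Icc_subset_Icc ha hb
  calc charge p M
      = ∑ x ∈ Finset.Icc a b, (Module.finrank k (M.V x) : ℂ) * (p x - p (x - 1)) := by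
        refine (Finset.sum_subset hsub fun x _ hx => ?_).symm
        have hxM : x ∉ M.supp := by rwa [hsupp, ← Finset.coe_Icc, Finset.mem_coe]
        simp [ARep.finrank_eq_zero_of_notMem_supp hxM]
    _ = ∑ x ∈ Finset.Icc a b, (p x - p (x - 1)) := by
        refine Finset.sum_congr rfl fun x hx => ?_
        have hxM : x ∈ M.supp := by rwa [hsupp, ← Finset.coe_Icc, Finset.mem_coe]
        simp [hM.finrank_eq_one hxM]
    _ = p b - p (a - 1) := by
        obtain ⟨c, rfl⟩ := Nat.exists_eq_add_of_le' ha
        rw [← Finset.Ico_add_one_right_eq_Icc, ← Finset.sum_Ico_add']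
        exact Finset.sum_Ico_sub p (by lia)

/-- Abel summation: each vertex contributes the jump of the dimension across it. -/
lemma cross2_charge_eq_sum (p : ℕ → ℂ) (u o : ℂ) (M : ARep k n ε) :
    cross2 u (charge p M) = ∑ x ∈ Finset.range (n + 3),
      ((Module.finrank k (M.V x) : ℝ) - Module.finrank k (M.V (x + 1))) *
        cross2 u (p x - o) := by
  have hfirst : Module.finrank k (M.V 0) = 0 :=
    ARep.finrank_eq_zero_of_notMem_supp fun h => by simpa using M.supp_subset_Icc h
  have hlast : Module.finrank k (M.V (n + 3)) = 0 :=
    ARep.finrank_eq_zero_of_notMem_supp fun h => by simpa using M.supp_subset_Icc h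
  have habel := sum_Icc_mul_sub (fun x => (Module.finrank k (M.V x) : ℝ))
    (fun x => cross2 u (p x - o)) (n + 2)
  simp only [hfirst, hlast, Nat.cast_zero, zero_mul, sub_zero, zero_add] at habel
  rw [← habel]
  simp only [charge, cross2, Complex.re_sum, Complex.im_sum, Finset.mul_sum]
  rw [← Finset.sum_sub_distrib]
  refine Finset.sum_congr rfl fun x _ => ?_
  simp only [Complex.mul_re, Complex.mul_im, Complex.sub_re, Complex.sub_im, Complex.natCast_re,
    Complex.natCast_im]
  ring

lemma PolyPts.finrank_sub_finrank_mul_cross2_neg (hp : PolyPts n ε p) (hM : M.Indec)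
    (L : Subrep M) {a b x : ℕ} (ha : 1 ≤ a) (hb : b ≤ n + 2) (hsupp : M.supp = Set.Icc a b)
    (hax : a ≤ x) (hxb : x < b) (hne : Module.finrank k (L.U x) ≠ Module.finrank k (L.U (x + 1))) :
    ((Module.finrank k (L.U x) : ℝ) - Module.finrank k (L.U (x + 1))) *
      cross2 (p b - p (a - 1)) (p x - p (a - 1)) < 0 := by
  have hx : x ∈ M.supp := hsupp ▸ ⟨hax, hxb.le⟩
  have hx' : x + 1 ∈ M.supp := hsupp ▸ ⟨hax.trans x.le_succ, hxb⟩
  cases hε : ε x with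
  | true =>
    have hlt := (L.finrank_le_finrank_succ (hM.injective_fwd hx hx' hε)).lt_of_ne hne
    exact mul_neg_of_neg_of_pos (sub_neg.2 (Nat.cast_lt.2 hlt))
      (hp.cross2_pos_of_upper (by lia) hxb hb hε)
  | false =>
    have hlt := (L.finrank_succ_le_finrank (hM.injective_bwd hx hx' hε)).lt_of_ne' hne
    exact mul_neg_of_pos_of_neg (sub_pos.2 (Nat.cast_lt.2 hlt))
      (hp.cross2_neg_of_lower (by lia) hxb hb hε)

theorem PolyPts.cross2_charge_neg (hp : PolyPts n ε p) (hM : M.Indec) {L : Subrep M}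
    (hbot : ∃ x, L.U x ≠ ⊥) (htop : ∃ x, L.U x ≠ ⊤) :
    cross2 (charge p M) (charge p L.toRep) < 0 := by
  obtain ⟨a, b, ha, hab, hb, hsupp⟩ := hM.exists_supp_eq_Icc
  obtain ⟨x, hx, hx', hne⟩ := L.exists_finrank_ne_finrank_succ hM hbot htop
  rw [hM.charge_eq ha hab hb hsupp, cross2_charge_eq_sum p _ (p (a - 1))]
  refine Finset.sum_neg' (fun y _ => ?_) ⟨x, ?_, ?_⟩
  · change ((Module.finrank k (L.U y) : ℝ) - Module.finrank k (L.U (y + 1))) * _ ≤ 0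
    by_cases hjump : Module.finrank k (L.U y) = Module.finrank k (L.U (y + 1))
    · simp [hjump]
    by_cases hya : y = a - 1
    · simp [hya, cross2]
    by_cases hyb : y = b
    · simp [hyb, cross2, mul_comm]
    by_cases hy : a ≤ y ∧ y < b
    · exact (hp.finrank_sub_finrank_mul_cross2_neg hM L ha hb hsupp hy.1 hy.2 hjump).le
    · have hyM : y ∉ M.supp := by rw [hsupp, Set.mem_Icc]; lia
      have hyM' : y + 1 ∉ M.supp := by rw [hsupp, Set.mem_Icc]; lia
      simp [L.finrank_eq_zero_of_notMem_supp hyM, L.finrank_eq_zero_of_notMem_supp hyM']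
  · have := (M.supp_subset_Icc hx').2
    exact Finset.mem_range.2 (by lia)
  · rw [hsupp] at hx hx'
    exact hp.finrank_sub_finrank_mul_cross2_neg hM L ha hb hsupp hx.1 hx'.2 hne

end Charge

lemma arg_lt_arg_of_cross2_neg {u v : ℂ} (hu : 0 < u.re) (hv : 0 < v.re) (h : cross2 v u < 0) :
    u.arg < v.arg := by
  have hu' := abs_lt.1 (Complex.abs_arg_lt_pi_div_two_iff.2 (.inl hu))
  have hv' := abs_lt.1 (Complex.abs_arg_lt_pi_div_two_iff.2 (.inl hv))
  rw [← Real.strictMonoOn_tan.lt_iff_lt hu' hv', Complex.tan_arg, Complex.tan_arg,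
    div_lt_div_iff₀ hu hv]
  rw [cross2] at h
  linarith

lemma arg_div_pi_mem_Ioo {z : ℂ} (hz : 0 < z.re) :
    z.arg / Real.pi ∈ Set.Ioo (-(1 / 2) : ℝ) (1 / 2) := by
  obtain ⟨hlo, hhi⟩ := abs_lt.1 (Complex.abs_arg_lt_pi_div_two_iff.2 (.inl hz))
  constructor
  · rw [lt_div_iff₀ Real.pi_pos]
    linarith
  · rw [div_lt_iff₀ Real.pi_pos]
    linarith

/-- the central charge `Z` takes values in the strict right half plane, the
associated stability function `φ = arg∘Z/π` takes values in `(−1/2, 1/2)`, and every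
indecomposable representation is `φ`-stable. -/
theorem stmt_8 (k : Type) [Field k] (n : ℕ) (ε : ℕ → Bool) (p : ℕ → ℂ)
    (hp : PolyPts n ε p) :
    (∀ M : ARep k n ε, ¬M.IsZero → 0 < (charge p M).re) ∧
    (∀ M : ARep k n ε, ¬M.IsZero →
      Complex.arg (charge p M) / Real.pi ∈ Set.Ioo (-(1 / 2) : ℝ) (1 / 2)) ∧
    (∀ M : ARep k n ε, M.Indec → ∀ L : Subrep M,
      (∃ x, L.U x ≠ ⊥) → (∃ x, L.U x ≠ ⊤) →
      Complex.arg (subCharge p L) / Real.pi < Complex.arg (charge p M) / Real.pi) := by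
  have hpos (M : ARep k n ε) (hM : ¬M.IsZero) : 0 < (charge p M).re := hp.charge_re_pos hM
  refine ⟨hpos, fun M hM => arg_div_pi_mem_Ioo (hpos M hM), fun M hM L hbot htop => ?_⟩
  have hL : 0 < (charge p L.toRep).re := hpos _ (Subrep.not_isZero_toRep hbot)
  have hcross : cross2 (charge p M) (charge p L.toRep) < 0 := hp.cross2_charge_neg hM hbot htop
  exact div_lt_div_of_pos_right (arg_lt_arg_of_cross2_neg hL (hpos M hM.1) hcross) Real.pi_pos

end CambrianA
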